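/- For every λ > 0 there exists t > 0 with ∫₀^∞ cos(pt) · p²/(p⁴ + λ⁴) dp < 0; explicitly, at t = π/(√2·λ) this integral equals −(π/(2√2·λ))·e^{−π/2} < 0. -/

import Mathlib

open MeasureTheory Real

/-!
The complex pole pair of the Gribov form factor comes from a single Lorentzian of complex width:
with `λ⁴ = 4a⁴` one has `p² / (p⁴ + λ⁴) = Re (p² + c²)⁻¹` for `c = a (1 + i)`. The cosine transform
of `(p² + c²)⁻¹` is `π / (2c) · exp (-c |t|)` by Fourier inversion, whenever `0 < Re c`. Taking real
parts turns this exponential into the damped oscillation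
`π / (4a) · exp (-a |t|) · (cos (a |t|) - sin (a |t|))`, which is negative at `a |t| = π / 2`.
-/

open Complex (I)
open scoped FourierTransform

lemma integral_eq_integral_Ioi_add_comp_neg {E : Type*} [NormedAddCommGroup E] [NormedSpace ℝ E]
    {f : ℝ → E} (hf : Integrable f) :
    ∫ x, f x = ∫ x in Set.Ioi 0, (f x + f (-x)) := by
  rw [integral_add hf.integrableOn hf.comp_neg.integrableOn, integral_comp_neg_Ioi, neg_zero,
    add_comm, intervalIntegral.integral_Iic_add_Ioi hf.integrableOn hf.integrableOn]

section AngularFrequency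

variable {E : Type*} [NormedAddCommGroup E] [NormedSpace ℂ E]

lemma integrable_cexp_mul_I_smul {g : ℝ → E} (hg : Integrable g) (t : ℝ) :
    Integrable fun p : ℝ => Complex.exp (p * t * I) • g p := by
  refine hg.bdd_smul 1 (Continuous.aestronglyMeasurable (by fun_prop)) (.of_forall fun p => ?_)
  rw [← Complex.ofReal_mul, Complex.norm_exp_ofReal_mul_I]

lemma integral_cexp_mul_I_smul_of_fourier_eq [CompleteSpace E] {f g : ℝ → E} (hf : Continuous f)
    (hf_int : Integrable f) (hg : Integrable g) (hfg : ∀ v, 𝓕 f v = g (2 * π * v)) (t : ℝ) :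
    ∫ p : ℝ, Complex.exp (p * t * I) • g p = (2 * π) • f t := by
  have hfourier : 𝓕 f = fun v => g (2 * π * v) := funext hfg
  have hinv : f t = ∫ v : ℝ, Complex.exp ((2 * π * v : ℝ) * t * I) • g (2 * π * v) := by
    have hfourier_int : Integrable (𝓕 f) := hfourier ▸ hg.comp_mul_left' two_pi_pos.ne'
    rw [← congrFun (hf.fourierInv_fourier_eq hf_int hfourier_int) t, fourierInv_eq', hfourier]
    simp only [Real.inner_apply, ← Complex.ofReal_mul, mul_assoc]
  rw [hinv, Measure.integral_comp_mul_left (fun p : ℝ => Complex.exp (p * t * I) • g p),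
    abs_of_pos (inv_pos.mpr two_pi_pos), smul_inv_smul₀ two_pi_pos.ne']

lemma integral_cexp_mul_I_smul_of_even {g : ℝ → E} (hg : Integrable g)
    (heven : Function.Even g) (t : ℝ) :
    ∫ p : ℝ, Complex.exp (p * t * I) • g p
      = (2 : ℂ) • ∫ p in Set.Ioi (0 : ℝ), (Real.cos (p * t) : ℂ) • g p := by
  rw [integral_eq_integral_Ioi_add_comp_neg (integrable_cexp_mul_I_smul hg t), ← integral_smul]
  congr 1 with p
  rw [heven p, ← add_smul, smul_smul, Complex.ofReal_cos, Complex.two_cos]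
  push_cast
  simp only [neg_mul]

end AngularFrequency

section TwoSidedExponential

lemma eqOn_cexp_sub_mul_abs_Ioi (c w : ℂ) :
    Set.EqOn (fun x : ℝ => Complex.exp (w * x - c * (|x| : ℝ)))
      (fun x : ℝ => Complex.exp ((w - c) * x)) (Set.Ioi 0) := fun x hx => by
  simp only [abs_of_pos (Set.mem_Ioi.mp hx), sub_mul]

lemma eqOn_cexp_sub_mul_abs_Iic (c w : ℂ) :
    Set.EqOn (fun x : ℝ => Complex.exp (w * x - c * (|x| : ℝ)))
      (fun x : ℝ => Complex.exp ((w + c) * x)) (Set.Iic 0) := fun x hx => by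
  simp only [abs_of_nonpos (Set.mem_Iic.mp hx), Complex.ofReal_neg, mul_neg, sub_neg_eq_add,
    add_mul]

variable {c w : ℂ}

lemma integrableOn_Ioi_cexp_sub_mul_abs (h : w.re < c.re) :
    IntegrableOn (fun x : ℝ => Complex.exp (w * x - c * (|x| : ℝ))) (Set.Ioi 0) :=
  (integrableOn_exp_mul_complex_Ioi (by simpa using h) 0).congr_fun
    (eqOn_cexp_sub_mul_abs_Ioi c w).symm measurableSet_Ioi

lemma integrableOn_Iic_cexp_sub_mul_abs (h : -c.re < w.re) :
    IntegrableOn (fun x : ℝ => Complex.exp (w * x - c * (|x| : ℝ))) (Set.Iic 0) :=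
  (integrableOn_exp_mul_complex_Iic (by simpa [neg_lt_iff_pos_add] using h) 0).congr_fun
    (eqOn_cexp_sub_mul_abs_Iic c w).symm measurableSet_Iic

lemma integrable_cexp_sub_mul_abs (h : |w.re| < c.re) :
    Integrable fun x : ℝ => Complex.exp (w * x - c * (|x| : ℝ)) := by
  rw [← integrableOn_univ, ← Set.Iic_union_Ioi (a := (0 : ℝ))]
  exact (integrableOn_Iic_cexp_sub_mul_abs (abs_lt.mp h).1).union
    (integrableOn_Ioi_cexp_sub_mul_abs (abs_lt.mp h).2)

lemma integral_cexp_sub_mul_abs (h : |w.re| < c.re) :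
    ∫ x : ℝ, Complex.exp (w * x - c * (|x| : ℝ)) = 2 * c / (c ^ 2 - w ^ 2) := by
  obtain ⟨hlower, hupper⟩ := abs_lt.mp h
  have hsub : (w - c).re < 0 := by simpa using hupper
  have hadd : 0 < (w + c).re := by simpa [neg_lt_iff_pos_add] using hlower
  have hsub_ne : w - c ≠ 0 := fun h0 => by simp [h0] at hsub
  have hadd_ne : w + c ≠ 0 := fun h0 => by simp [h0] at hadd
  have hden : c ^ 2 - w ^ 2 = -((w - c) * (w + c)) := by ring
  rw [← intervalIntegral.integral_Iic_add_Ioi (integrableOn_Iic_cexp_sub_mul_abs hlower)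
      (integrableOn_Ioi_cexp_sub_mul_abs hupper),
    setIntegral_congr_fun measurableSet_Iic (eqOn_cexp_sub_mul_abs_Iic c w),
    setIntegral_congr_fun measurableSet_Ioi (eqOn_cexp_sub_mul_abs_Ioi c w),
    integral_exp_mul_complex_Iic hadd, integral_exp_mul_complex_Ioi hsub, hden]
  simp only [Complex.ofReal_zero, mul_zero, Complex.exp_zero]
  field_simp
  ring

lemma integrable_cexp_neg_mul_abs (hc : 0 < c.re) :
    Integrable fun x : ℝ => Complex.exp (-c * (|x| : ℝ)) := by
  simpa using integrable_cexp_sub_mul_abs (w := 0) (by simpa using hc)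

lemma fourier_cexp_neg_mul_abs (hc : 0 < c.re) (v : ℝ) :
    𝓕 (fun x : ℝ => Complex.exp (-c * (|x| : ℝ))) v
      = 2 * c * (((2 * π * v : ℝ) : ℂ) ^ 2 + c ^ 2)⁻¹ := by
  have hden : c ^ 2 - (-(2 * π * v : ℝ) * I) ^ 2 = ((2 * π * v : ℝ) : ℂ) ^ 2 + c ^ 2 := by
    rw [mul_pow, Complex.I_sq]
    ring
  rw [← div_eq_mul_inv, ← hden, ← integral_cexp_sub_mul_abs (by simpa using hc),
    fourier_real_eq_integral_exp_smul]
  congr 1 with x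
  rw [smul_eq_mul, ← Complex.exp_add]
  congr 1
  push_cast
  ring

end TwoSidedExponential

section Lorentzian

lemma integrable_inv_sub_sq_add_sq {a : ℝ} (ha : a ≠ 0) (b : ℝ) :
    Integrable fun x : ℝ => ((x - b) ^ 2 + a ^ 2)⁻¹ := by
  convert ((integrable_inv_one_add_sq.comp_div ha).comp_sub_right b).const_mul (a ^ 2)⁻¹ using 2
    with x
  field_simp
  ring

lemma norm_inv_sq_add_sq_le (c : ℂ) (p : ℝ) :
    ‖((p : ℂ) ^ 2 + c ^ 2)⁻¹‖
      ≤ ((p - c.im) ^ 2 + c.re ^ 2)⁻¹ + ((p + c.im) ^ 2 + c.re ^ 2)⁻¹ := by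
  have hfactor : (p : ℂ) ^ 2 + c ^ 2 = (p + I * c) * (p - I * c) := by
    linear_combination c ^ 2 * Complex.I_sq
  have hplus : ‖(p : ℂ) + I * c‖ ^ 2 = (p - c.im) ^ 2 + c.re ^ 2 := by
    rw [Complex.sq_norm, Complex.normSq_apply]
    simp only [Complex.add_re, Complex.add_im, Complex.ofReal_re,
      Complex.ofReal_im, Complex.mul_re, Complex.mul_im, Complex.I_re, Complex.I_im]
    ring
  have hminus : ‖(p : ℂ) - I * c‖ ^ 2 = (p + c.im) ^ 2 + c.re ^ 2 := by
    rw [Complex.sq_norm, Complex.normSq_apply]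
    simp only [Complex.sub_re, Complex.sub_im, Complex.ofReal_re,
      Complex.ofReal_im, Complex.mul_re, Complex.mul_im, Complex.I_re, Complex.I_im]
    ring
  rw [hfactor, norm_inv, norm_mul, mul_inv, ← hplus, ← hminus, ← inv_pow, ← inv_pow]
  have hprod : 0 ≤ ‖(p : ℂ) + I * c‖⁻¹ * ‖(p : ℂ) - I * c‖⁻¹ := by positivity
  linarith [two_mul_le_add_sq ‖(p : ℂ) + I * c‖⁻¹ ‖(p : ℂ) - I * c‖⁻¹]

variable {c : ℂ}

lemma integrable_inv_sq_add_sq (hc : c.re ≠ 0) :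
    Integrable fun p : ℝ => ((p : ℂ) ^ 2 + c ^ 2)⁻¹ := by
  have hminus := integrable_inv_sub_sq_add_sq hc c.im
  have hplus := integrable_inv_sub_sq_add_sq hc (-c.im)
  simp only [sub_neg_eq_add] at hplus
  exact (hminus.add hplus).mono' (Measurable.aestronglyMeasurable (by fun_prop))
    (.of_forall (norm_inv_sq_add_sq_le c))

lemma integral_cexp_mul_I_mul_inv_sq_add_sq (hc : 0 < c.re) (t : ℝ) :
    ∫ p : ℝ, Complex.exp (p * t * I) * ((p : ℂ) ^ 2 + c ^ 2)⁻¹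
      = π / c * Complex.exp (-c * (|t| : ℝ)) := by
  have hc0 : c ≠ 0 := fun h0 => by simp [h0] at hc
  have hinv := integral_cexp_mul_I_smul_of_fourier_eq (by fun_prop)
    (integrable_cexp_neg_mul_abs hc) ((integrable_inv_sq_add_sq hc.ne').const_mul (2 * c))
    (fourier_cexp_neg_mul_abs hc) t
  simp only [smul_eq_mul, mul_left_comm _ (2 * c), integral_const_mul, Complex.real_smul] at hinv
  rw [← mul_right_inj' (mul_ne_zero two_ne_zero hc0), hinv]
  push_cast
  field_simp

lemma integral_cos_mul_inv_sq_add_sq (hc : 0 < c.re) (t : ℝ) :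
    ∫ p in Set.Ioi (0 : ℝ), (Real.cos (p * t) : ℂ) * ((p : ℂ) ^ 2 + c ^ 2)⁻¹
      = π / (2 * c) * Complex.exp (-c * (|t| : ℝ)) := by
  have heven : Function.Even fun p : ℝ => ((p : ℂ) ^ 2 + c ^ 2)⁻¹ := fun p => by
    simp only [Complex.ofReal_neg, neg_sq]
  have hfold := integral_cexp_mul_I_smul_of_even (integrable_inv_sq_add_sq hc.ne') heven t
  simp only [smul_eq_mul, integral_cexp_mul_I_mul_inv_sq_add_sq hc] at hfold
  rw [← mul_right_inj' (two_ne_zero' ℂ), ← hfold]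
  field_simp

lemma integrable_cos_mul_inv_sq_add_sq (hc : c.re ≠ 0) (t : ℝ) :
    Integrable fun p : ℝ => (Real.cos (p * t) : ℂ) * ((p : ℂ) ^ 2 + c ^ 2)⁻¹ := by
  refine (integrable_inv_sq_add_sq hc).bdd_mul (c := 1)
    (Continuous.aestronglyMeasurable (by fun_prop)) (.of_forall fun p => ?_)
  rw [Complex.norm_real]
  exact Real.abs_cos_le_one _

end Lorentzian

section Gribov

lemma re_inv_sq_add_sq_mul_one_add_I (a p : ℝ) :
    (((p : ℂ) ^ 2 + (a * (1 + I)) ^ 2)⁻¹).re = p ^ 2 / (p ^ 4 + 4 * a ^ 4) := by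
  have hsq : (p : ℂ) ^ 2 + (a * (1 + I)) ^ 2 = (p ^ 2 : ℝ) + (2 * a ^ 2 : ℝ) * I := by
    push_cast
    linear_combination (a : ℂ) ^ 2 * Complex.I_sq
  rw [hsq, Complex.inv_re, Complex.normSq_add_mul_I, Complex.add_re, Complex.ofReal_re,
    Complex.re_ofReal_mul, Complex.I_re]
  ring

lemma re_pi_div_mul_cexp_neg_mul_one_add_I (a s : ℝ) :
    (π / (2 * (a * (1 + I))) * Complex.exp (-(a * (1 + I)) * s)).re
      = π / (4 * a) * Real.exp (-(a * s)) * (Real.cos (a * s) - Real.sin (a * s)) := by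
  have hinv : (1 + I)⁻¹ = (1 - I) / 2 :=
    inv_eq_of_mul_eq_one_right (by linear_combination -(1 / 2 : ℂ) * Complex.I_sq)
  have hamplitude : (π : ℂ) / (2 * (a * (1 + I))) = (π / (4 * a) : ℝ) * (1 - I) := by
    rw [div_eq_mul_inv, mul_inv, mul_inv, hinv]
    push_cast
    ring
  have hexponent : -(a * (1 + I)) * s = ((-(a * s) : ℝ) : ℂ) + ((-(a * s) : ℝ) : ℂ) * I := by
    push_cast
    ring
  rw [hamplitude, hexponent, Complex.exp_add, ← Complex.ofReal_exp, mul_assoc,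
    Complex.re_ofReal_mul, mul_left_comm, Complex.re_ofReal_mul, Complex.mul_re,
    Complex.exp_ofReal_mul_I_re, Complex.exp_ofReal_mul_I_im, Real.cos_neg, Real.sin_neg]
  simp only [Complex.sub_re, Complex.sub_im, Complex.one_re, Complex.one_im, Complex.I_re,
    Complex.I_im]
  ring

lemma integral_cos_mul_sq_div_pow_four_add {a : ℝ} (ha : 0 < a) (t : ℝ) :
    ∫ p in Set.Ioi (0 : ℝ), Real.cos (p * t) * (p ^ 2 / (p ^ 4 + 4 * a ^ 4))
      = π / (4 * a) * Real.exp (-(a * |t|)) * (Real.cos (a * |t|) - Real.sin (a * |t|)) := by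
  have hc : 0 < ((a : ℂ) * (1 + I)).re := by simpa using ha
  rw [← re_pi_div_mul_cexp_neg_mul_one_add_I, ← integral_cos_mul_inv_sq_add_sq hc,
    ← RCLike.re_eq_complex_re,
    ← integral_re (integrable_cos_mul_inv_sq_add_sq hc.ne' t).integrableOn]
  simp only [RCLike.re_eq_complex_re, Complex.re_ofReal_mul, re_inv_sq_add_sq_mul_one_add_I]

end Gribov

/-- Positivity violation of the Gribov-type gluon propagator: for every
`λ > 0` there exists `t > 0` with `∫₀^∞ cos(pt)·p²/(p⁴ + λ⁴) dp < 0`; explicitly, at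
`t = π/(√2·λ)` the integral equals `−(π/(2√2·λ))·e^{−π/2} < 0`. -/
theorem gribov_positivity_violation (lam : ℝ) (hlam : 0 < lam) :
    (∫ p in Set.Ioi (0 : ℝ),
          Real.cos (p * (π / (Real.sqrt 2 * lam))) * (p ^ 2 / (p ^ 4 + lam ^ 4))
        = -(π / (2 * Real.sqrt 2 * lam)) * Real.exp (-(π / 2)))
    ∧ ∃ t : ℝ, 0 < t ∧
        (∫ p in Set.Ioi (0 : ℝ), Real.cos (p * t) * (p ^ 2 / (p ^ 4 + lam ^ 4))) < 0 := by
  obtain ⟨a, ha, rfl⟩ : ∃ a : ℝ, 0 < a ∧ lam = √2 * a :=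
    ⟨lam / √2, by positivity, by field_simp⟩
  have hsqrt : √2 * (√2 * a) = 2 * a := by rw [← mul_assoc, mul_self_sqrt zero_le_two]
  have hpow : (√2 * a) ^ 4 = 4 * a ^ 4 := by
    rw [mul_pow, show √2 ^ 4 = (√2 ^ 2) ^ 2 by ring, sq_sqrt zero_le_two]
    norm_num
  have ht : 0 < π / (2 * a) := by positivity
  have hphase : a * |π / (2 * a)| = π / 2 := by
    rw [abs_of_pos ht]
    field_simp
  have hvalue : ∫ p in Set.Ioi (0 : ℝ), Real.cos (p * (π / (2 * a))) * (p ^ 2 / (p ^ 4 + 4 * a ^ 4))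
      = -(π / (4 * a)) * Real.exp (-(π / 2)) := by
    rw [integral_cos_mul_sq_div_pow_four_add ha, hphase, Real.cos_pi_div_two, Real.sin_pi_div_two]
    ring
  rw [mul_assoc 2, hsqrt, hpow, ← mul_assoc, show (2 : ℝ) * 2 = 4 by norm_num]
  refine ⟨hvalue, _, ht, ?_⟩
  rw [hvalue, neg_mul]
  exact neg_neg_of_pos (by positivity)
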